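/- Let ε_g : ℝ → ℝ be differentiable, let a, b : ℝ → ℝ be twice differentiable, define u : ℝ³ → ℝ by u(x,y,z) = a(z) + b(z)(x² + y²), and let R > 0. Then for every s ∈ ℝ, the integral of ∇·(ε_g ∇u)(·,·,s) over the disk {(x,y) : x² + y² ≤ R²} equals πR² [ε_g(s)(4 b(s) + a''(s)) + ε_g'(s) a'(s)] + (πR⁴/2) [ε_g(s) b''(s) + ε_g'(s) b'(s)]. -/

import Mathlib

open MeasureTheory Real

theorem disk_radial_integral (C D R : ℝ) (hR : 0 < R) :
    ∫ p : ℝ × ℝ in {p : ℝ × ℝ | p.1 ^ 2 + p.2 ^ 2 ≤ R ^ 2}, (C + D * (p.1 ^ 2 + p.2 ^ 2))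
      = Real.pi * R ^ 2 * C + Real.pi * R ^ 4 / 2 * D := by
  have hm : MeasurableSet {p : ℝ × ℝ | p.1 ^ 2 + p.2 ^ 2 ≤ R ^ 2} :=
    measurableSet_le (by fun_prop) (by fun_prop)
  rw [← integral_indicator hm, ← integral_comp_polarCoord_symm]
  have h1 : ∀ p ∈ polarCoord.target,
      p.1 • ({p : ℝ × ℝ | p.1 ^ 2 + p.2 ^ 2 ≤ R ^ 2}.indicator
        (fun p : ℝ × ℝ => C + D * (p.1 ^ 2 + p.2 ^ 2)) (polarCoord.symm p))
      = ((Set.Iic R).indicator (fun r : ℝ => r * (C + D * r ^ 2)) p.1) * (fun _ : ℝ => (1 : ℝ)) p.2 := by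
    rintro ⟨r, θ⟩ hp
    have hr : 0 < r := by
      simp only [polarCoord_target, Set.mem_prod, Set.mem_Ioi] at hp
      exact hp.1
    have e : (r * Real.cos θ) ^ 2 + (r * Real.sin θ) ^ 2 = r ^ 2 := by
      have := Real.cos_sq_add_sin_sq θ
      linear_combination r ^ 2 * this
    have e2 : r ^ 2 ≤ R ^ 2 ↔ r ≤ R := pow_le_pow_iff_left₀ hr.le hR.le two_ne_zero
    simp only [Set.indicator_apply, polarCoord_symm_apply, Set.mem_ofPred_eq, e, e2, Set.mem_Iic,
      smul_eq_mul, mul_one, mul_ite, mul_zero]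
  rw [setIntegral_congr_fun polarCoord.open_target.measurableSet h1, polarCoord_target,
    Measure.volume_eq_prod,
    setIntegral_prod_mul ((Set.Iic R).indicator (fun r : ℝ => r * (C + D * r ^ 2)))
      (fun _ : ℝ => (1 : ℝ))]
  have h2 : ∫ θ : ℝ in Set.Ioo (-Real.pi) Real.pi, (fun _ : ℝ => (1 : ℝ)) θ = 2 * Real.pi := by
    simp [Real.pi_pos.le]
    ring
  have h3 : ∫ r : ℝ in Set.Ioi 0, (Set.Iic R).indicator (fun r : ℝ => r * (C + D * r ^ 2)) r
      = C * R ^ 2 / 2 + D * R ^ 4 / 4 := by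
    rw [setIntegral_indicator measurableSet_Iic, Set.Ioi_inter_Iic,
      ← intervalIntegral.integral_of_le hR.le]
    have hd : ∀ x ∈ Set.uIcc 0 R, HasDerivAt (fun r : ℝ => C * r ^ 2 / 2 + D * r ^ 4 / 4)
        (x * (C + D * x ^ 2)) x := by
      intro x _
      have := (((hasDerivAt_pow 2 x).const_mul C).div_const 2).add
        (((hasDerivAt_pow 4 x).const_mul D).div_const 4)
      refine HasDerivAt.congr_deriv this ?_
      push_cast
      ring
    rw [intervalIntegral.integral_eq_sub_of_hasDerivAt hd
      (Continuous.intervalIntegrable (by fun_prop) _ _)]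
    ring
  rw [h2, h3]
  ring

theorem deriv_quad (e α β c x : ℝ) :
    deriv (fun t => e * deriv (fun t' : ℝ => α + β * (t' ^ 2 + c)) t) x = 2 * e * β := by
  have h : ∀ t : ℝ, deriv (fun t' : ℝ => α + β * (t' ^ 2 + c)) t = β * (2 * t) := by
    intro t
    have := (((hasDerivAt_pow 2 t).add_const c).const_mul β).const_add α
    simpa using this.deriv
  simp only [h]
  have := ((((hasDerivAt_id x).const_mul 2).const_mul β).const_mul e).deriv
  simp only [id] at this
  rw [this]
  ring

/-- Section integral of `∇·(ε_g ∇u)` for `u(x,y,z) = a(z) + b(z)(x² + y²)`: for every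
`s`, the integral of `∇·(ε_g ∇u)(·,·,s)` over the disk `{x² + y² ≤ R²}` equals
`πR² [ε_g(s)(4b(s) + a''(s)) + ε_g'(s) a'(s)] + (πR⁴/2)[ε_g(s) b''(s) + ε_g'(s) b'(s)]`. -/
theorem disk_integral_div_eps_grad
    (εg : ℝ → ℝ) (hε : Differentiable ℝ εg)
    (a b : ℝ → ℝ)
    (ha : Differentiable ℝ a) (ha' : Differentiable ℝ (deriv a))
    (hb : Differentiable ℝ b) (hb' : Differentiable ℝ (deriv b))
    (R : ℝ) (hR : 0 < R) :
    ∀ s : ℝ,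
      ∫ p : ℝ × ℝ in {p : ℝ × ℝ | p.1 ^ 2 + p.2 ^ 2 ≤ R ^ 2},
          (deriv (fun t => εg s * deriv (fun t' => a s + b s * (t' ^ 2 + p.2 ^ 2)) t) p.1
            + deriv (fun t => εg s * deriv (fun t' => a s + b s * (p.1 ^ 2 + t' ^ 2)) t) p.2
            + deriv (fun t => εg t * deriv (fun t' => a t' + b t' * (p.1 ^ 2 + p.2 ^ 2)) t) s)
        = Real.pi * R ^ 2
            * (εg s * (4 * b s + deriv (deriv a) s) + deriv εg s * deriv a s)
          + Real.pi * R ^ 4 / 2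
            * (εg s * deriv (deriv b) s + deriv εg s * deriv b s) := by
  intro s
  have key : ∀ p : ℝ × ℝ,
      (deriv (fun t => εg s * deriv (fun t' => a s + b s * (t' ^ 2 + p.2 ^ 2)) t) p.1
            + deriv (fun t => εg s * deriv (fun t' => a s + b s * (p.1 ^ 2 + t' ^ 2)) t) p.2
            + deriv (fun t => εg t * deriv (fun t' => a t' + b t' * (p.1 ^ 2 + p.2 ^ 2)) t) s)
      = (εg s * (4 * b s + deriv (deriv a) s) + deriv εg s * deriv a s)
        + (εg s * deriv (deriv b) s + deriv εg s * deriv b s) * (p.1 ^ 2 + p.2 ^ 2) := by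
    intro p
    have h1 := deriv_quad (εg s) (a s) (b s) (p.2 ^ 2) p.1
    have h2 := deriv_quad (εg s) (a s) (b s) (p.1 ^ 2) p.2
    simp only [add_comm _ (p.1 ^ 2)] at h2
    rw [h1, h2]
    have h3 : ∀ t : ℝ, deriv (fun t' => a t' + b t' * (p.1 ^ 2 + p.2 ^ 2)) t
        = deriv a t + deriv b t * (p.1 ^ 2 + p.2 ^ 2) := fun t =>
      ((ha t).hasDerivAt.add ((hb t).hasDerivAt.mul_const _)).deriv
    simp only [h3]
    have h4 := ((hε s).hasDerivAt.mul
      ((ha' s).hasDerivAt.add ((hb' s).hasDerivAt.mul_const (p.1 ^ 2 + p.2 ^ 2)))).deriv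
    have h5 : deriv (fun t => εg t * (deriv a t + deriv b t * (p.1 ^ 2 + p.2 ^ 2))) s = _ := h4
    rw [h5]
    simp only [Pi.add_apply]
    ring
  simp only [key]
  exact disk_radial_integral _ _ R hR
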